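/- Let m ≥ 3 and n ≥ 1 be integers and let (A_i)_{i ∈ ZMod m} be a cyclically indexed family of finite subsets of a set Q such that: |A_i| = 2n for every i; |A_i ∩ A_{i+1}| = n for every i; and A_i ∩ A_j = ∅ whenever j ∉ {i−1, i, i+1}. Then for every real number x, Σ_{(i,j)} x^{|A_i Δ A_j|} = x^{4n}·m² + (1 + 2x^{2n} − 3x^{4n})·m, where Δ denotes symmetric difference and the sum is over ordered pairs (i,j) ∈ ZMod m × ZMod m. -/

import Mathlib

open scoped symmDiff

/-!
Since `|S ∆ T| + 2 |S ∩ T| = |S| + |T|`, the exponent `|A i ∆ A j|` is `0` for `j = i`, `2n` for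
`j = i ± 1`, and `4n` otherwise. As `m ≥ 3`, the residues `i - 1`, `i`, `i + 1` are distinct, so
each row `i` of the sum is `m x^{4n}` corrected at these three positions, and all `m` rows agree.
-/

theorem card_symmDiff_add_two_mul_card_inter {Q : Type*} [DecidableEq Q] (S T : Finset Q) :
    (S ∆ T).card + 2 * (S ∩ T).card = S.card + T.card := by
  have h : (S ∆ T).card = (S \ T).card + (T \ S).card :=
    Finset.card_union_of_disjoint disjoint_sdiff_sdiff
  have h1 := Finset.card_sdiff_add_card_inter S T
  have h2 := Finset.card_sdiff_add_card_inter T S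
  rw [Finset.inter_comm T S] at h2
  omega

/-- Let `m ≥ 3`, `n ≥ 1`, and `(A i)_{i ∈ ZMod m}` a cyclically indexed
family of finite subsets of `Q` with `|A i| = 2n`, `|A i ∩ A (i+1)| = n`, and
`A i ∩ A j = ∅` whenever `j ∉ {i-1, i, i+1}`. Then for every real `x`,
`Σ_{(i,j)} x^{|A i ∆ A j|} = x^{4n} m² + (1 + 2x^{2n} - 3x^{4n}) m`. -/
theorem stmt10 {Q : Type*} [DecidableEq Q] (m : ℕ) [NeZero m] (hm : 3 ≤ m)
    (n : ℕ) (hn : 1 ≤ n) (A : ZMod m → Finset Q)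
    (hsize : ∀ i, (A i).card = 2 * n)
    (hadj : ∀ i, (A i ∩ A (i + 1)).card = n)
    (hdisj : ∀ i j : ZMod m, j ≠ i - 1 → j ≠ i → j ≠ i + 1 → A i ∩ A j = ∅)
    (x : ℝ) :
    ∑ ij : ZMod m × ZMod m, x ^ (A ij.1 ∆ A ij.2).card =
      x ^ (4 * n) * (m : ℝ) ^ 2 + (1 + 2 * x ^ (2 * n) - 3 * x ^ (4 * n)) * (m : ℝ) := by
  have h1 : (1 : ZMod m) ≠ 0 := by
    intro h
    have h' : ((1 : ℕ) : ZMod m) = 0 := by exact_mod_cast h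
    have := Nat.le_of_dvd (by norm_num) ((ZMod.natCast_eq_zero_iff 1 m).1 h')
    omega
  have h2 : (2 : ZMod m) ≠ 0 := by
    intro h
    have h' : ((2 : ℕ) : ZMod m) = 0 := by exact_mod_cast h
    have := Nat.le_of_dvd (by norm_num) ((ZMod.natCast_eq_zero_iff 2 m).1 h')
    omega
  have key : ∀ i j : ZMod m, x ^ (A i ∆ A j).card =
      x ^ (4 * n) + (if j = i then 1 - x ^ (4 * n) else 0)
        + (if j = i + 1 then x ^ (2 * n) - x ^ (4 * n) else 0)
        + (if j = i - 1 then x ^ (2 * n) - x ^ (4 * n) else 0) := by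
    intro i j
    have hc := card_symmDiff_add_two_mul_card_inter (A i) (A j)
    rw [hsize, hsize] at hc
    have hne1 : i ≠ i + 1 := fun h => h1 (by linear_combination -h)
    have hne2 : i ≠ i - 1 := fun h => h1 (by linear_combination h)
    have hne3 : i + 1 ≠ i - 1 := fun h => h2 (by linear_combination h)
    by_cases hi : j = i
    · subst hi
      simp [hne1, hne2]
    by_cases hp : j = i + 1
    · subst hp
      rw [hadj] at hc
      rw [show (A i ∆ A (i + 1)).card = 2 * n by omega, if_neg hi, if_pos rfl, if_neg hne3]
      ring
    by_cases hq : j = i - 1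
    · subst hq
      have h := hadj (i - 1)
      rw [sub_add_cancel, Finset.inter_comm] at h
      rw [h] at hc
      rw [show (A i ∆ A (i - 1)).card = 2 * n by omega, if_neg hi, if_neg hp, if_pos rfl]
      ring
    · rw [hdisj i j hq hi hp, Finset.card_empty] at hc
      rw [show (A i ∆ A j).card = 4 * n by omega, if_neg hi, if_neg hp, if_neg hq]
      ring
  rw [Fintype.sum_prod_type]
  simp only [key, Finset.sum_add_distrib, Finset.sum_ite_eq', Finset.mem_univ, if_true,
    Finset.sum_const, Finset.card_univ, ZMod.card, nsmul_eq_mul]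
  ring
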